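/- arXiv:2108.13849 — 2 statements merged into one kernel-verified Lean document; each statement's English description precedes it below -/
import Mathlib

section
/- For every a ∈ k^×, the set of maximal D^{≥0}-submodules of W_{a,0} is exactly the family {V_{a,c} : c ∈ k}, where V_{a,c} is the cyclic submodule generated by ζ⊗x_{a,0} + (c/2)·(1⊗x_{a,0}). -/
open FreeAlgebra

/-- Generators of the double of the Jordan plane. -/
inductive JGen : Type
  | u | v | zeta | g | ginv | x | y

variable (k : Type) [Field k] [IsAlgClosed k] [CharZero k]

/-- The defining relations of the double of the Jordan plane. -/
inductive JRel : FreeAlgebra k JGen → FreeAlgebra k JGen → Prop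
  | gginv : JRel (ι k .g * ι k .ginv) 1
  | ginvg : JRel (ι k .ginv * ι k .g) 1
  | zg : JRel (ι k .zeta * ι k .g) (ι k .g * ι k .zeta)
  | gx : JRel (ι k .g * ι k .x) (ι k .x * ι k .g)
  | gy : JRel (ι k .g * ι k .y) (ι k .y * ι k .g + ι k .x * ι k .g)
  | zy : JRel (ι k .zeta * ι k .y) (ι k .y * ι k .zeta + ι k .y)
  | zx : JRel (ι k .zeta * ι k .x) (ι k .x * ι k .zeta + ι k .x)
  | ug : JRel (ι k .u * ι k .g) (ι k .g * ι k .u)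
  | vg : JRel (ι k .v * ι k .g) (ι k .g * ι k .v + ι k .g * ι k .u)
  | vz : JRel (ι k .v * ι k .zeta) (ι k .zeta * ι k .v + ι k .v)
  | uz : JRel (ι k .u * ι k .zeta) (ι k .zeta * ι k .u + ι k .u)
  | yx : JRel (ι k .y * ι k .x) (ι k .x * ι k .y - (1/2 : k) • (ι k .x * ι k .x))
  | vu : JRel (ι k .v * ι k .u) (ι k .u * ι k .v - (1/2 : k) • (ι k .u * ι k .u))
  | ux : JRel (ι k .u * ι k .x) (ι k .x * ι k .u)
  | vx : JRel (ι k .v * ι k .x) (ι k .x * ι k .v + (1 - ι k .g) + ι k .x * ι k .u)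
  | uy : JRel (ι k .u * ι k .y) (ι k .y * ι k .u + (1 - ι k .g))
  | vy : JRel (ι k .v * ι k .y) (ι k .y * ι k .v - ι k .g * ι k .zeta + ι k .y * ι k .u)

/-- The double of the Jordan plane, as the presented algebra. -/
def D : Type := RingQuot (JRel k)

noncomputable instance : Ring (D k) := inferInstanceAs (Ring (RingQuot (JRel k)))
noncomputable instance : Algebra k (D k) := inferInstanceAs (Algebra k (RingQuot (JRel k)))

/-- The canonical projection from the free algebra onto `D`. -/
noncomputable def Dmk : FreeAlgebra k JGen →ₐ[k] D k := RingQuot.mkAlgHom k (JRel k)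

noncomputable def DU : D k := Dmk k (ι k .u)
noncomputable def DV : D k := Dmk k (ι k .v)
noncomputable def DZ : D k := Dmk k (ι k .zeta)
noncomputable def DG : D k := Dmk k (ι k .g)
noncomputable def DGinv : D k := Dmk k (ι k .ginv)
noncomputable def DX : D k := Dmk k (ι k .x)
noncomputable def DY : D k := Dmk k (ι k .y)

set_option synthInstance.maxHeartbeats 1000000
set_option maxHeartbeats 2000000

/-- The subalgebra `D^{≥0}` of `D` generated by `g, g⁻¹, ζ, u, v`. -/
noncomputable def Dgeq : Subalgebra k (D k) :=
  Algebra.adjoin k {DG k, DGinv k, DZ k, DU k, DV k}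

noncomputable def sG : Dgeq k := ⟨DG k, Algebra.subset_adjoin (by simp)⟩
noncomputable def sGinv : Dgeq k := ⟨DGinv k, Algebra.subset_adjoin (by simp)⟩
noncomputable def sZ : Dgeq k := ⟨DZ k, Algebra.subset_adjoin (by simp)⟩
noncomputable def sU : Dgeq k := ⟨DU k, Algebra.subset_adjoin (by simp)⟩
noncomputable def sV : Dgeq k := ⟨DV k, Algebra.subset_adjoin (by simp)⟩

/-- The left ideal of `D^{≥0}` generated by `g - a`, `v - b` and `u`
(the annihilator of the generator `x_{a,b}` of the one-dimensional `H`-module `k_{a,b}`). -/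
noncomputable def WIdeal (a b : k) : Submodule (Dgeq k) (Dgeq k) :=
  Submodule.span (Dgeq k)
    {sG k - algebraMap k (Dgeq k) a, sV k - algebraMap k (Dgeq k) b, sU k}

/-- The induced module `W_{a,b} = D^{≥0} ⊗_H k_{a,b}`, realized as the quotient of `D^{≥0}`
by the left ideal `WIdeal a b`. -/
noncomputable abbrev Wmod (a b : k) : Type := (Dgeq k) ⧸ (WIdeal k a b)

/-- The class of `d ∈ D^{≥0}` in `W_{a,b}`; the class of `1` corresponds to `1 ⊗ x_{a,b}`. -/
noncomputable def wmk (a b : k) : Dgeq k → Wmod k a b := Submodule.Quotient.mk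
/-- The submodule `V_{a,c}` of `W_{a,0}` generated by `ζ ⊗ x_{a,0} + (c/2)·(1 ⊗ x_{a,0})`. -/
noncomputable def Vsub (a c : k) : Submodule (Dgeq k) (Wmod k a 0) :=
  Submodule.span (Dgeq k) {wmk k a 0 (sZ k + algebraMap k (Dgeq k) (c / 2))}

/-!
Since `g`, `g⁻¹`, `u`, `v` normalise `k[ζ]` up to the substitutions `ζ ↦ ζ` and `ζ ↦ ζ + 1`, the
module `W_{a,b}` is the orbit `k[ζ] · w` of its generator `w`. Its `D^{≥0}`-submodules therefore
embed into the ideals of `k[X]`, and over an algebraically closed field every proper ideal lies in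
some `(X - l)`. So the maximal submodules are exactly the submodules generated by `(ζ - l) w`,
provided all of these are proper.

Properness needs, for each `l`, a `D^{≥0}`-module in which some nonzero vector is killed by `u` and
`v` and has eigenvalues `a` and `l` under `g` and `ζ`. As `D^{≥0}` is only given inside `D`, the
module has to carry an action of all of `D`: it is the Verma module of highest weight `(a, l)`,
realised by differential operators on polynomials in two variables.
-/

namespace JordanDouble

section OrbitMap

variable {R A B M : Type*} [CommSemiring R] [Semiring A] [Algebra R A] [Semiring B] [Algebra R B]
  [AddCommMonoid M] [Module B M]

/-- The orbit map `a ↦ σ a • m` of a vector `m` of a `B`-module, for an algebra homomorphism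
`σ : A → B`. It is `A`-linear when `A` acts on the module through `σ`, which is encoded as
semilinearity along `σ`. -/
def orbitMap (σ : A →ₐ[R] B) (m : M) : A →ₛₗ[(σ : A →+* B)] M :=
  (LinearMap.toSpanSingleton B M m).comp (σ : A →+* B).toSemilinearMap

@[simp]
lemma orbitMap_apply (σ : A →ₐ[R] B) (m : M) (a : A) : orbitMap σ m a = σ a • m := rfl

end OrbitMap

section SurjectiveComap

variable {A B M N : Type*} [Semiring A] [Semiring B] [AddCommMonoid M] [AddCommMonoid N]
  [Module A M] [Module B N] {σ : A →+* B} {φ : M →ₛₗ[σ] N}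

lemma comap_le_comap_iff_of_surjective (hφ : Function.Surjective φ) {L L' : Submodule B N} :
    L.comap φ ≤ L'.comap φ ↔ L ≤ L' :=
  ⟨fun h n hn ↦ by obtain ⟨m, rfl⟩ := hφ n; exact h hn, fun h ↦ Submodule.comap_mono h⟩

lemma comap_ne_top_of_surjective (hφ : Function.Surjective φ) {L : Submodule B N} (hL : L ≠ ⊤) :
    L.comap φ ≠ ⊤ := by
  rwa [ne_eq, ← top_le_iff, ← Submodule.comap_top φ, comap_le_comap_iff_of_surjective hφ,
    top_le_iff]

end SurjectiveComap

section PolynomialOrbit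

open Polynomial

section Surjective

variable {R S M : Type*} [CommSemiring R] [Semiring S] [Algebra R S] [AddCommMonoid M] [Module S M]

lemma mul_aeval_eq_aeval_mul {x y z : S} (h : x * z = y * x) (f : R[X]) :
    x * aeval z f = aeval y f * x := by
  induction f using Polynomial.induction_on' with
  | add p q hp hq => simp only [map_add, mul_add, add_mul, hp, hq]
  | monomial n c =>
    have hpow : x * z ^ n = y ^ n * x := SemiconjBy.pow_right h n
    rw [aeval_monomial, aeval_monomial, ← mul_assoc, ← Algebra.commutes, mul_assoc, hpow, mul_assoc]

lemma smul_orbitMap_aeval {x z : S} {w : M} {c : R} {q : R[X]} (hxz : x * z = aeval z q * x)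
    (hxw : x • w = algebraMap R S c • w) (f : R[X]) :
    x • orbitMap (aeval z) w f = orbitMap (aeval z) w (f.comp q * C c) := by
  rw [orbitMap_apply, orbitMap_apply, ← mul_smul, mul_aeval_eq_aeval_mul hxz, mul_smul, hxw,
    map_mul, aeval_comp, aeval_C, mul_smul]

lemma orbitMap_aeval_surjective {s : Set S} (hs : Algebra.adjoin R s = ⊤) {z : S} {w : M}
    (hw : Submodule.span S {w} = ⊤)
    (hstable : ∀ x ∈ s, ∀ f : R[X],
      x • orbitMap (aeval z) w f ∈ Set.range (orbitMap (aeval (R := R) z) w)) :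
    Function.Surjective (orbitMap (aeval (R := R) z) w) := by
  have hall (x : S) : ∀ f : R[X],
      x • orbitMap (aeval z) w f ∈ Set.range (orbitMap (aeval (R := R) z) w) := by
    have hx : x ∈ Algebra.adjoin R s := hs ▸ Algebra.mem_top
    induction hx using Algebra.adjoin_induction with
    | mem x hx => exact hstable x hx
    | algebraMap r => exact fun f ↦ ⟨C r * f, by simp [mul_smul]⟩
    | add x y _ _ hx hy =>
      intro f
      obtain ⟨p, hp⟩ := hx f
      obtain ⟨q, hq⟩ := hy f
      exact ⟨p + q, by rw [map_add, hp, hq, add_smul]⟩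
    | mul x y _ _ hx hy =>
      intro f
      obtain ⟨p, hp⟩ := hy f
      rw [mul_smul, ← hp]
      exact hx p
  intro m
  obtain ⟨x, rfl⟩ := Submodule.mem_span_singleton.mp (hw ▸ Submodule.mem_top : m ∈ _)
  simpa using hall x 1

end Surjective

section Coatoms

variable {K S M : Type*} [Field K] [Ring S] [Algebra K S] [AddCommGroup M] [Module S M]

lemma isMaximal_span_X_sub_C (l : K) : (Ideal.span {X - C l}).IsMaximal :=
  PrincipalIdealRing.isMaximal_of_irreducible (irreducible_X_sub_C l)

lemma exists_le_span_X_sub_C [IsAlgClosed K] {J : Ideal K[X]} (hJ : J ≠ ⊤) :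
    ∃ l : K, J ≤ Ideal.span {X - C l} := by
  obtain ⟨p, rfl⟩ := IsPrincipalIdealRing.principal J
  have hdegree : p.degree ≠ 0 := fun h ↦
    hJ (Ideal.span_singleton_eq_top.mpr (isUnit_iff_degree_eq_zero.mpr h))
  obtain ⟨l, hl⟩ := IsAlgClosed.exists_root p hdegree
  exact ⟨l, Ideal.span_singleton_le_span_singleton.mpr (dvd_iff_isRoot.mpr hl)⟩

variable {z : S} {w : M}

lemma comap_orbitMap_aeval_eq_span_X_sub_C
    (hsurj : Function.Surjective (orbitMap (aeval (R := K) z) w)) {l : K} {N : Submodule S M}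
    (hN : N ≠ ⊤) (hl : (z - algebraMap K S l) • w ∈ N) :
    N.comap (orbitMap (aeval (R := K) z) w) = Ideal.span {X - C l} := by
  refine ((isMaximal_span_X_sub_C l).eq_of_le (comap_ne_top_of_surjective hsurj hN) ?_).symm
  rw [Ideal.span_singleton_le_iff_mem]
  simpa using hl

theorem isCoatom_iff_exists_eq_span_sub_smul [IsAlgClosed K]
    (hsurj : Function.Surjective (orbitMap (aeval (R := K) z) w))
    (hproper : ∀ l : K, Submodule.span S {(z - algebraMap K S l) • w} ≠ ⊤) {N : Submodule S M} :
    IsCoatom N ↔ ∃ l : K, N = Submodule.span S {(z - algebraMap K S l) • w} := by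
  have hmem (l : K) := Submodule.mem_span_singleton_self (R := S) ((z - algebraMap K S l) • w)
  constructor
  · intro hN
    obtain ⟨l, hl⟩ := exists_le_span_X_sub_C (comap_ne_top_of_surjective hsurj hN.1)
    rw [← comap_orbitMap_aeval_eq_span_X_sub_C hsurj (hproper l) (hmem l),
      comap_le_comap_iff_of_surjective hsurj] at hl
    exact ⟨l, ((hN.le_iff_eq (hproper l)).mp hl).symm⟩
  · rintro ⟨l, rfl⟩
    refine ⟨hproper l, fun L hlt ↦ by_contra fun hL ↦ hlt.not_ge ?_⟩
    rw [← comap_le_comap_iff_of_surjective hsurj,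
      comap_orbitMap_aeval_eq_span_X_sub_C hsurj hL (hlt.le (hmem l)),
      comap_orbitMap_aeval_eq_span_X_sub_C hsurj (hproper l) (hmem l)]

end Coatoms

end PolynomialOrbit

lemma isUnit_one_add_of_locally_nilpotent {R M : Type*} [Ring R] [AddCommGroup M]
    [Module R M]
    {n : Module.End R M} (hn : ∀ m, ∃ i : ℕ, (n ^ i) m = 0) : IsUnit (1 + n) := by
  have hneg (m : M) : ∃ i : ℕ, ((-n) ^ i) m = 0 := by
    obtain ⟨i, hi⟩ := hn m
    exact ⟨i, by rw [neg_pow, Module.End.mul_apply, hi, map_zero]⟩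
  rw [← sub_neg_eq_add, Module.End.isUnit_iff, Function.Bijective, injective_iff_map_eq_zero]
  refine ⟨fun m hm ↦ ?_, fun m ↦ ?_⟩ <;> obtain ⟨i, hi⟩ := hneg m
  · have hgeom := LinearMap.congr_fun (geom_sum_mul_neg (-n) i) m
    rwa [Module.End.mul_apply, hm, map_zero, LinearMap.sub_apply, hi, sub_zero, eq_comm] at hgeom
  · refine ⟨(∑ j ∈ Finset.range i, (-n) ^ j) m, ?_⟩
    rw [← Module.End.mul_apply, mul_neg_geom_sum, LinearMap.sub_apply, hi, sub_zero,
      Module.End.one_apply]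

section Pderiv

open MvPolynomial

lemma pderiv_pderiv_comm {R σ : Type*} [CommRing R] (i j : σ) (f : MvPolynomial σ R) :
    pderiv i (pderiv j f) = pderiv j (pderiv i f) := by
  classical
  have hcomm : ⁅(pderiv i : Derivation R (MvPolynomial σ R) (MvPolynomial σ R)), pderiv j⁆ = 0 :=
    derivation_ext fun s ↦ by
      rw [Derivation.commutator_apply, pderiv_X, pderiv_X, Pi.single_apply, Pi.single_apply]
      split_ifs <;> simp
  have happly := DFunLike.congr_fun hcomm f
  rwa [Derivation.commutator_apply, Derivation.zero_apply, sub_eq_zero] at happly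

variable {R σ : Type*} [CommSemiring R] {i : σ} {n : ℕ} {f : MvPolynomial σ R}

lemma coeff_iterate_pderiv_eq_zero {m : σ →₀ ℕ}
    (h : f.coeff (m + Finsupp.single i n) = 0) : ((pderiv i)^[n] f).coeff m = 0 := by
  induction n generalizing f with
  | zero => simpa using h
  | succ n ih =>
    rw [Function.iterate_succ_apply]
    refine ih ?_
    rw [coeff_pderiv, add_assoc, ← Finsupp.single_add, h, zero_mul]

lemma iterate_pderiv_eq_zero (h : f.degreeOf i < n) : (pderiv i)^[n] f = 0 := by
  ext m
  refine coeff_iterate_pderiv_eq_zero (notMem_support_iff.mp fun hm ↦ ?_)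
  have hle := monomial_le_degreeOf i hm
  rw [Finsupp.add_apply, Finsupp.single_eq_same] at hle
  omega

end Pderiv

section Shear

open MvPolynomial

variable {R : Type*} [CommSemiring R]

variable (R) in
/-- Multiplication by the `i`-th variable, as an operator on polynomials in two variables. -/
noncomputable abbrev mulX (i : Fin 2) : Module.End R (MvPolynomial (Fin 2) R) :=
  LinearMap.mulLeft R (X i)

variable (R) in
/-- The `i`-th partial derivative, as an operator on polynomials in two variables. -/
noncomputable abbrev partialX (i : Fin 2) : Module.End R (MvPolynomial (Fin 2) R) :=
  (pderiv i).toLinearMap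

variable (R) in
/-- The unipotent operator `1 + X₀ ∂₁`; up to a scalar, `g` acts on the Verma modules of the
double of the Jordan plane by its square. -/
noncomputable def shear : Module.End R (MvPolynomial (Fin 2) R) := 1 + mulX R 0 * partialX R 1

lemma mulX_mul_partialX_pow_apply (n : ℕ) (f : MvPolynomial (Fin 2) R) :
    ((mulX R 0 * partialX R 1) ^ n) f = X 0 ^ n * (pderiv 1)^[n] f := by
  induction n with
  | zero => simp
  | succ n ih =>
    rw [pow_succ', Module.End.mul_apply, ih, Function.iterate_succ_apply']
    simp [pderiv_X, pow_succ', mul_assoc]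

lemma isUnit_shear {R : Type*} [CommRing R] : IsUnit (shear R) :=
  isUnit_one_add_of_locally_nilpotent fun f ↦ ⟨f.degreeOf 1 + 1, by
    rw [mulX_mul_partialX_pow_apply, iterate_pderiv_eq_zero (Nat.lt_succ_self _), mul_zero]⟩

end Shear

section Verma

open MvPolynomial

variable {F : Type} [Field F]

/-- The action of the generators of `D` on its Verma module of highest weight `(a, l)`: the module
generated by a vector `1` with `u`, `v` acting by `0`, `g` by `a` and `ζ` by `l`. The basis
`xⁱyʲ · 1` is encoded as the polynomial `(2 X₀)ⁱ X₁ʲ`; the operators are obtained by moving the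
generators past `xⁱyʲ` with the relations of `D`. -/
noncomputable def vermaAction (a l : F) : JGen → Module.End F (MvPolynomial (Fin 2) F)
  | .u => (1 - a • shear F) * partialX F 1
  | .v => (1 / 2 : F) • (((2 * (1 + a)) • shear F - (3 * a) • shear F ^ 2 - 1) * partialX F 0
      + mulX F 1 * (1 - (2 * a) • shear F) * partialX F 1 ^ 2
      - (2 * a) • ((l + 1) • shear F - 1) * partialX F 1)
  | .zeta => l • 1 + mulX F 0 * partialX F 0 + mulX F 1 * partialX F 1
  | .g => a • shear F ^ 2
  | .ginv => Ring.inverse (a • shear F ^ 2)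
  | .x => (2 : F) • mulX F 0
  | .y => mulX F 1 - mulX F 0 ^ 2 * partialX F 0

lemma isUnit_vermaAction_g {a : F} (ha : a ≠ 0) (l : F) : IsUnit (vermaAction a l .g) :=
  (isUnit_shear.pow 2).smul (Units.mk0 a ha)

variable [NeZero (2 : F)] {a : F}

lemma lift_vermaAction_eq_of_rel (ha : a ≠ 0) (l : F) {p q : FreeAlgebra F JGen}
    (h : JRel F p q) :
    lift F (vermaAction a l) p = lift F (vermaAction a l) q := by
  cases h with
  | gginv =>
    rw [map_mul, lift_ι_apply, lift_ι_apply, map_one]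
    exact Ring.mul_inverse_cancel _ (isUnit_vermaAction_g ha l)
  | ginvg =>
    rw [map_mul, lift_ι_apply, lift_ι_apply, map_one]
    exact Ring.inverse_mul_cancel _ (isUnit_vermaAction_g ha l)
  | _ =>
    -- Applied to `f`, the relation is a ring identity in `X₀`, `X₁` and the derivatives of `f`.
    refine LinearMap.ext fun f ↦ ?_
    have hhalf : (2 : MvPolynomial (Fin 2) F) * C (2⁻¹ : F) = 1 := by
      rw [← map_ofNat C, ← C_mul, mul_inv_cancel₀ two_ne_zero, C_1]
    simp only [vermaAction, shear, lift_ι_apply, map_mul, map_add, map_sub, map_smul, map_one,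
      pow_succ, pow_zero, one_mul, one_div, LinearMap.add_apply, LinearMap.sub_apply,
      LinearMap.smul_apply, Module.End.mul_apply, Module.End.one_apply, LinearMap.mulLeft_apply,
      Derivation.coeFn_coe, Derivation.leibniz, pderiv_X_self, pderiv_X_of_ne zero_ne_one,
      pderiv_X_of_ne one_ne_zero, pderiv_pderiv_comm (1 : Fin 2) 0, smul_eq_mul, smul_add, mul_zero,
      mul_one, add_zero]
    simp only [smul_eq_C_mul, map_mul, map_add, map_one, map_ofNat]
    grind

/-- The Verma module of highest weight `(a, l)`, as a representation of `D`. -/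
noncomputable def vermaRep (ha : a ≠ 0) (l : F) :
    D F →ₐ[F] Module.End F (MvPolynomial (Fin 2) F) :=
  RingQuot.liftAlgHom F ⟨lift F (vermaAction a l), fun _ _ h ↦ lift_vermaAction_eq_of_rel ha l h⟩

lemma vermaRep_mk_ι (ha : a ≠ 0) (l : F) (i : JGen) :
    vermaRep ha l (Dmk F (ι F i)) = vermaAction a l i :=
  (RingQuot.liftAlgHom_mkAlgHom_apply ..).trans (lift_ι_apply ..)

lemma vermaRep_DG_one (ha : a ≠ 0) (l : F) : vermaRep ha l (DG F) 1 = C a := by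
  simp [DG, vermaRep_mk_ι, vermaAction, shear, pow_two, smul_eq_C_mul]

lemma vermaRep_DU_one (ha : a ≠ 0) (l : F) : vermaRep ha l (DU F) 1 = 0 := by
  simp [DU, vermaRep_mk_ι, vermaAction]

lemma vermaRep_DV_one (ha : a ≠ 0) (l : F) : vermaRep ha l (DV F) 1 = 0 := by
  simp [DV, vermaRep_mk_ι, vermaAction, pow_two]

lemma vermaRep_DZ_one (ha : a ≠ 0) (l : F) : vermaRep ha l (DZ F) 1 = C l := by
  simp [DZ, vermaRep_mk_ι, vermaAction, smul_eq_C_mul]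

end Verma

section NonnegativePart

variable (F : Type) [Field F]

lemma adjoin_generators_eq_top :
    Algebra.adjoin F {sG F, sGinv F, sZ F, sU F, sV F} = (⊤ : Subalgebra F (Dgeq F)) := by
  have hpreimage : ({sG F, sGinv F, sZ F, sU F, sV F} : Set (Dgeq F)) =
      Subtype.val ⁻¹' {DG F, DGinv F, DZ F, DU F, DV F} := by
    ext x
    simp only [Set.mem_insert_iff, Set.mem_singleton_iff, Set.mem_preimage, Subtype.ext_iff, sG,
      sGinv, sZ, sU, sV]
  rw [hpreimage]
  exact Algebra.adjoin_adjoin_coe_preimage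

variable {F} in
lemma Dmk_eq_of_rel {p q : FreeAlgebra F JGen} (h : JRel F p q) : Dmk F p = Dmk F q :=
  RingQuot.mkAlgHom_rel F h

lemma sG_mul_sGinv : sG F * sGinv F = 1 :=
  Subtype.ext (by simpa [sG, sGinv, DG, DGinv] using Dmk_eq_of_rel JRel.gginv)

lemma sGinv_mul_sG : sGinv F * sG F = 1 :=
  Subtype.ext (by simpa [sG, sGinv, DG, DGinv] using Dmk_eq_of_rel JRel.ginvg)

lemma commute_sG_sZ : Commute (sG F) (sZ F) :=
  Subtype.ext (by simpa [sG, sZ, DG, DZ] using (Dmk_eq_of_rel JRel.zg).symm)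

lemma commute_sGinv_sZ : Commute (sGinv F) (sZ F) :=
  Commute.units_inv_left (u := ⟨sG F, sGinv F, sG_mul_sGinv F, sGinv_mul_sG F⟩) (commute_sG_sZ F)

lemma sU_mul_sZ : sU F * sZ F = (sZ F + 1) * sU F :=
  Subtype.ext (by simpa [add_mul, sU, sZ, DU, DZ] using Dmk_eq_of_rel JRel.uz)

lemma sV_mul_sZ : sV F * sZ F = (sZ F + 1) * sV F :=
  Subtype.ext (by simpa [add_mul, sV, sZ, DV, DZ] using Dmk_eq_of_rel JRel.vz)

end NonnegativePart

section InducedModule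

variable {F : Type} [Field F] (a b : F)

variable {a b} in
lemma smul_wmk (x y : Dgeq F) : x • wmk F a b y = wmk F a b (x * y) := rfl

variable {a b} in
lemma wmk_eq_smul_wmk_one (x : Dgeq F) : wmk F a b x = x • wmk F a b 1 := by
  rw [smul_wmk, mul_one]

lemma span_wmk_one : Submodule.span (Dgeq F) {wmk F a b 1} = ⊤ := by
  refine (Submodule.eq_top_iff').mpr fun m ↦ ?_
  obtain ⟨x, rfl⟩ := Submodule.Quotient.mk_surjective _ m
  exact Submodule.mem_span_singleton.mpr ⟨x, (wmk_eq_smul_wmk_one x).symm⟩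

lemma sG_smul_wmk_one : sG F • wmk F a b 1 = algebraMap F (Dgeq F) a • wmk F a b 1 := by
  rw [← wmk_eq_smul_wmk_one, ← wmk_eq_smul_wmk_one]
  exact (Submodule.Quotient.eq _).mpr (Submodule.subset_span (by simp))

lemma sV_smul_wmk_one : sV F • wmk F a b 1 = algebraMap F (Dgeq F) b • wmk F a b 1 := by
  rw [← wmk_eq_smul_wmk_one, ← wmk_eq_smul_wmk_one]
  exact (Submodule.Quotient.eq _).mpr (Submodule.subset_span (by simp))

lemma sU_smul_wmk_one : sU F • wmk F a b 1 = 0 := by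
  rw [← wmk_eq_smul_wmk_one]
  exact (Submodule.Quotient.mk_eq_zero _).mpr (Submodule.subset_span (by simp))

variable {a} in
lemma sGinv_smul_wmk_one (ha : a ≠ 0) :
    sGinv F • wmk F a b 1 = algebraMap F (Dgeq F) a⁻¹ • wmk F a b 1 := by
  have hcancel : algebraMap F (Dgeq F) a⁻¹ * algebraMap F (Dgeq F) a = 1 := by
    rw [← map_mul, inv_mul_cancel₀ ha, map_one]
  calc sGinv F • wmk F a b 1
    _ = sGinv F • (algebraMap F (Dgeq F) a⁻¹ • algebraMap F (Dgeq F) a • wmk F a b 1) := by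
      rw [← mul_smul (algebraMap F (Dgeq F) a⁻¹), hcancel, one_smul]
    _ = algebraMap F (Dgeq F) a⁻¹ • (sGinv F * sG F) • wmk F a b 1 := by
      rw [← sG_smul_wmk_one a b, ← mul_smul, ← Algebra.commutes, mul_smul, mul_smul]
    _ = algebraMap F (Dgeq F) a⁻¹ • wmk F a b 1 := by rw [sGinv_mul_sG, one_smul]

open Polynomial in
variable {a} in
lemma orbitMap_aeval_sZ_surjective (ha : a ≠ 0) :
    Function.Surjective (orbitMap (aeval (R := F) (sZ F)) (wmk F a b 1)) := by
  refine orbitMap_aeval_surjective (adjoin_generators_eq_top F) (span_wmk_one a b) ?_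
  rintro x (rfl | rfl | rfl | rfl | rfl) f
  · exact ⟨_, (smul_orbitMap_aeval (q := X) (by simpa using (commute_sG_sZ F).eq)
      (sG_smul_wmk_one a b) f).symm⟩
  · exact ⟨_, (smul_orbitMap_aeval (q := X) (by simpa using (commute_sGinv_sZ F).eq)
      (sGinv_smul_wmk_one b ha) f).symm⟩
  · exact ⟨X * f, by simp [mul_smul]⟩
  · exact ⟨_, (smul_orbitMap_aeval (q := X + 1) (c := 0) (by simpa using sU_mul_sZ F)
      (by simpa using sU_smul_wmk_one a b) f).symm⟩
  · exact ⟨_, (smul_orbitMap_aeval (q := X + 1) (by simpa using sV_mul_sZ F)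
      (sV_smul_wmk_one a b) f).symm⟩

end InducedModule

section Properness

variable {F : Type} [Field F] [NeZero (2 : F)] {a : F}

lemma WIdeal_le_ker_orbitMap_vermaRep (ha : a ≠ 0) (l : F) :
    WIdeal F a 0 ≤ LinearMap.ker
      (orbitMap ((vermaRep ha l).comp (Dgeq F).val) (1 : MvPolynomial (Fin 2) F)) := by
  refine Submodule.span_le.mpr ?_
  rintro x (rfl | rfl | rfl)
  · simp [sG, vermaRep_DG_one, MvPolynomial.smul_eq_C_mul]
  · simp [sV, vermaRep_DV_one]
  · simp [sU, vermaRep_DU_one]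

/-- The `D^{≥0}`-linear map from `W_{a,0}` to the Verma module of highest weight `(a, l)` that sends
the generator to the highest weight vector. -/
noncomputable def wmodToVerma (ha : a ≠ 0) (l : F) :
    Wmod F a 0 →ₛₗ[((vermaRep ha l).comp (Dgeq F).val :
      Dgeq F →+* Module.End F (MvPolynomial (Fin 2) F))] MvPolynomial (Fin 2) F :=
  (WIdeal F a 0).liftQ _ (WIdeal_le_ker_orbitMap_vermaRep ha l)

lemma wmodToVerma_wmk (ha : a ≠ 0) (l : F) (x : Dgeq F) :
    wmodToVerma ha l (wmk F a 0 x) = vermaRep ha l x 1 := rfl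

lemma span_sZ_sub_smul_wmk_one_ne_top (ha : a ≠ 0) (l : F) :
    Submodule.span (Dgeq F) {(sZ F - algebraMap F (Dgeq F) l) • wmk F a 0 1} ≠ ⊤ := by
  have hle : Submodule.span (Dgeq F) {(sZ F - algebraMap F (Dgeq F) l) • wmk F a 0 1} ≤
      LinearMap.ker (wmodToVerma ha l) := by
    rw [Submodule.span_singleton_le_iff_mem, LinearMap.mem_ker, ← wmk_eq_smul_wmk_one,
      wmodToVerma_wmk]
    simp [sZ, vermaRep_DZ_one, MvPolynomial.smul_eq_C_mul]
  intro htop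
  have hmem : wmk F a 0 1 ∈ LinearMap.ker (wmodToVerma ha l) := hle (htop ▸ Submodule.mem_top)
  simp [wmodToVerma_wmk] at hmem

end Properness

lemma Vsub_eq_span_sub_smul {F : Type} [Field F] (a c : F) :
    Vsub F a c =
      Submodule.span (Dgeq F) {(sZ F - algebraMap F (Dgeq F) (-(c / 2))) • wmk F a 0 1} := by
  rw [Vsub, wmk_eq_smul_wmk_one, map_neg, sub_neg_eq_add]

end JordanDouble

open JordanDouble in
theorem maximal_submodules_Wa0_general {F : Type} [Field F] [IsAlgClosed F] [NeZero (2 : F)]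
    {a : F} (ha : a ≠ 0) :
    {N : Submodule (Dgeq F) (Wmod F a 0) | IsCoatom N} =
      {N : Submodule (Dgeq F) (Wmod F a 0) | ∃ c : F, N = Vsub F a c} := by
  have hsurj := orbitMap_aeval_sZ_surjective 0 ha
  have hproper := span_sZ_sub_smul_wmk_one_ne_top ha
  have hneg_half : Function.Surjective fun c : F ↦ -(c / 2) := fun l ↦
    ⟨-(2 * l), by dsimp only; rw [neg_div, neg_neg, mul_div_cancel_left₀ l two_ne_zero]⟩
  refine Set.ext fun N ↦ (isCoatom_iff_exists_eq_span_sub_smul hsurj hproper).trans ?_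
  simp only [Set.mem_ofPred_eq, Vsub_eq_span_sub_smul]
  exact hneg_half.exists

/-- for `a ∈ k^×`, the maximal submodules of `W_{a,0}` are exactly
the `V_{a,c}`, `c ∈ k`. -/
theorem maximal_submodules_Wa0 (a : k) (ha : a ≠ 0) :
    {N : Submodule (Dgeq k) (Wmod k a 0) | IsCoatom N} =
      {N : Submodule (Dgeq k) (Wmod k a 0) | ∃ c : k, N = Vsub k a c} :=
  maximal_submodules_Wa0_general ha
end

section
/- Every finite-dimensional simple D^{≥0}-module is one-dimensional and isomorphic to T_{a,c} for a unique pair (a,c) ∈ k^× × k; that is, (a,c) ↦ T_{a,c} induces a bijection from k^× × k onto the set of isomorphism classes of finite-dimensional simple D^{≥0}-modules. -/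
open FreeAlgebra

variable (k : Type) [Field k] [IsAlgClosed k] [CharZero k]

set_option synthInstance.maxHeartbeats 1000000
set_option maxHeartbeats 2000000

/-- The one-dimensional `D^{≥0}`-module `T_{a,c}`, realized as the quotient of `D^{≥0}` by the
left ideal generated by `g - a`, `ζ + c/2`, `u`, `v` (the annihilator of the generator
`z_{a,c}`, on which `g` acts by `a`, `ζ` by `-c/2` and `u`, `v` by `0`). -/
noncomputable abbrev Tmod (a c : k) : Type :=
  (Dgeq k) ⧸ (Submodule.span (Dgeq k)
    ({sG k - algebraMap k (Dgeq k) a, sZ k + algebraMap k (Dgeq k) (c / 2), sU k, sV k} :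
      Set (Dgeq k)))

/-!
Since `uζ = ζu + u` and `vζ = ζv + v`, both `u` and `v` lower `ζ`-eigenvalues by one. In finite
dimension and characteristic zero some eigenvalue `l` of `ζ` is such that `l - 1` is not one; then
`u` and `v` kill the `l`-eigenspace, and `g`, commuting with `ζ`, has an eigenvector in it. The line
through that vector is a submodule, so it is all of a simple module, and the module is recovered
from the eigenvalues of `g` and `ζ`. Conversely, that `T_{a,c}` is nonzero means that `D` imposes
no further relation on such a vector, which is seen in an explicit `D`-module.
-/

section Eigenvectors

variable {R M : Type*} [CommRing R] [AddCommGroup M] [Module R M] {f g : Module.End R M} {μ δ : R}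

theorem apply_mem_eigenspace_sub_of_mul_eq (hgf : g * f = f * g + δ • g) {x : M}
    (hx : x ∈ f.eigenspace μ) : g x ∈ f.eigenspace (μ - δ) := by
  rw [Module.End.mem_eigenspace_iff] at hx ⊢
  have hgfx : g (f x) = f (g x) + δ • g x := LinearMap.congr_fun hgf x
  rw [hx, map_smul] at hgfx
  rw [sub_smul, hgfx, add_sub_cancel_right]

theorem exists_hasEigenvalue_and_not_hasEigenvalue_sub [IsDomain R] [CharZero R]
    [Module.Finite R M] [Module.IsTorsionFree R M] (hμ : f.HasEigenvalue μ) (hδ : δ ≠ 0) :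
    ∃ ν, f.HasEigenvalue ν ∧ ¬ f.HasEigenvalue (ν - δ) := by
  by_contra! hsub
  have hall (n : ℕ) : f.HasEigenvalue (μ - n * δ) := by
    induction n with
    | zero => simpa using hμ
    | succ n ih => convert hsub _ ih using 1; push_cast; ring
  have hinj : Function.Injective fun n : ℕ => μ - n * δ := fun m n hmn => by
    simpa [hδ] using hmn
  exact Set.infinite_of_injective_forall_mem hinj hall f.finite_hasEigenvalue

theorem exists_common_hasEigenvector_of_commute {K V : Type*} [Field K] [IsAlgClosed K]
    [AddCommGroup V] [Module K V] [FiniteDimensional K V] {f g : Module.End K V} {μ : K}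
    (hfg : Commute f g) (hμ : f.HasEigenvalue μ) :
    ∃ (a : K) (z : V), f.HasEigenvector μ z ∧ g.HasEigenvector a z := by
  have hmaps : Set.MapsTo g (f.eigenspace μ) (f.eigenspace μ) :=
    Module.End.mapsTo_genEigenspace_of_comm hfg μ 1
  have : Nontrivial (f.eigenspace μ) := Submodule.nontrivial_iff_ne_bot.2 hμ
  obtain ⟨a, ha⟩ := Module.End.exists_eigenvalue (g.restrict hmaps)
  obtain ⟨z, hz⟩ := ha.exists_hasEigenvector
  have hz₀ : (z : V) ≠ 0 := by simpa using hz.2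
  have hgz : g z = a • (z : V) := congrArg Subtype.val hz.apply_eq_smul
  exact ⟨a, z, ⟨z.2, hz₀⟩, Module.End.mem_eigenspace_iff.2 hgz, hz₀⟩

end Eigenvectors

section LineStabilizer

variable (R A : Type*) {M : Type*} [CommSemiring R] [Semiring A] [Algebra R A] [AddCommMonoid M]
  [Module R M] [Module A M] [IsScalarTower R A M]

/-- The subalgebra of those elements of `A` that act on the vector `z` by a scalar from `R`. -/
def lineStabilizer (z : M) : Subalgebra R A where
  carrier := {d | ∃ r : R, d • z = r • z}
  mul_mem' := by
    rintro d e ⟨r, hr⟩ ⟨t, ht⟩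
    exact ⟨t * r, by rw [mul_smul, ht, smul_comm, hr, mul_smul]⟩
  add_mem' := by
    rintro d e ⟨r, hr⟩ ⟨t, ht⟩
    exact ⟨r + t, by rw [add_smul, hr, ht, add_smul]⟩
  algebraMap_mem' r := ⟨r, algebraMap_smul A r z⟩

end LineStabilizer

section Relations

variable {K : Type} [Field K]

theorem Dmk_eq_of_JRel {p q : FreeAlgebra K JGen} (h : JRel K p q) : Dmk K p = Dmk K q :=
  RingQuot.mkAlgHom_rel K h

variable (K)

theorem sGinv_mul_sG : sGinv K * sG K = 1 :=
  Subtype.ext (by simpa using! Dmk_eq_of_JRel (K := K) .ginvg)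

theorem sZ_mul_sG : sZ K * sG K = sG K * sZ K :=
  Subtype.ext (by simpa using! Dmk_eq_of_JRel (K := K) .zg)

theorem sU_mul_sZ : sU K * sZ K = sZ K * sU K + sU K :=
  Subtype.ext (by simpa using! Dmk_eq_of_JRel (K := K) .uz)

theorem sV_mul_sZ : sV K * sZ K = sZ K * sV K + sV K :=
  Subtype.ext (by simpa using! Dmk_eq_of_JRel (K := K) .vz)

variable {K}

theorem eq_top_of_generators_mem {S : Subalgebra K (Dgeq K)} (hG : sG K ∈ S) (hGinv : sGinv K ∈ S)
    (hZ : sZ K ∈ S) (hU : sU K ∈ S) (hV : sV K ∈ S) : S = ⊤ := by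
  refine eq_top_iff.2 (Algebra.adjoin_adjoin_coe_preimage.ge.trans (Algebra.adjoin_le ?_))
  rintro ⟨d, _⟩ (rfl | rfl | rfl | rfl | rfl)
  exacts [hG, hGinv, hZ, hU, hV]

end Relations

section WeightVectors

variable {K : Type} [Field K] {M N : Type*} [AddCommGroup M] [Module K M] [Module (Dgeq K) M]
  [AddCommGroup N] [Module K N] [Module (Dgeq K) N] {a l : K} {z : M}

/-- The vector `z` satisfies the defining relations of the generator of a one-dimensional
`D^{≥0}`-module: `g` acts on it by `a`, `ζ` by `l`, and `u`, `v` kill it. The zero vector is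
allowed, so that this is preserved by all `D^{≥0}`-linear maps. -/
structure IsWeightVector (a l : K) (z : M) : Prop where
  sG_smul : sG K • z = a • z
  sZ_smul : sZ K • z = l • z
  sU_smul : sU K • z = 0
  sV_smul : sV K • z = 0

namespace IsWeightVector

theorem left_ne_zero (hz : IsWeightVector a l z) (hz₀ : z ≠ 0) : a ≠ 0 := by
  rintro rfl
  apply hz₀
  rw [← one_smul (Dgeq K) z, ← sGinv_mul_sG, mul_smul, hz.sG_smul, zero_smul, smul_zero]

variable [IsScalarTower K (Dgeq K) M] [IsScalarTower K (Dgeq K) N]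

theorem map (hz : IsWeightVector a l z) (φ : M →ₗ[Dgeq K] N) : IsWeightVector a l (φ z) where
  sG_smul := by rw [← map_smul, hz.sG_smul, LinearMap.map_smul_of_tower]
  sZ_smul := by rw [← map_smul, hz.sZ_smul, LinearMap.map_smul_of_tower]
  sU_smul := by rw [← map_smul, hz.sU_smul, map_zero]
  sV_smul := by rw [← map_smul, hz.sV_smul, map_zero]

theorem sGinv_smul (hz : IsWeightVector a l z) (ha : a ≠ 0) : sGinv K • z = a⁻¹ • z := by
  rw [eq_inv_smul_iff₀ ha, ← smul_comm, ← hz.sG_smul, ← mul_smul, sGinv_mul_sG, one_smul]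

theorem exists_smul_eq (hz : IsWeightVector a l z) (ha : a ≠ 0) (d : Dgeq K) :
    ∃ r : K, d • z = r • z := by
  have hstab : lineStabilizer K (Dgeq K) z = ⊤ := eq_top_of_generators_mem
    ⟨a, hz.sG_smul⟩ ⟨a⁻¹, hz.sGinv_smul ha⟩ ⟨l, hz.sZ_smul⟩
    ⟨0, by rw [hz.sU_smul, zero_smul]⟩ ⟨0, by rw [hz.sV_smul, zero_smul]⟩
  exact (hstab.ge trivial : d ∈ lineStabilizer K (Dgeq K) z)

theorem finrank_eq_one (hz : IsWeightVector a l z) (hz₀ : z ≠ 0)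
    (hgen : Submodule.span (Dgeq K) {z} = ⊤) : Module.finrank K M = 1 := by
  refine _root_.finrank_eq_one z hz₀ fun m => ?_
  obtain ⟨d, rfl⟩ := Submodule.mem_span_singleton.1 (hgen.ge (Submodule.mem_top (x := m)))
  obtain ⟨r, hr⟩ := hz.exists_smul_eq (hz.left_ne_zero hz₀) d
  exact ⟨r, hr.symm⟩

theorem weight_unique (hM : Module.finrank K M = 1) {a' l' : K} {z' : M}
    (hz : IsWeightVector a l z) (hz₀ : z ≠ 0) (hz' : IsWeightVector a' l' z') (hz₀' : z' ≠ 0) :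
    a = a' ∧ l = l' := by
  obtain ⟨r, rfl⟩ := (finrank_eq_one_iff_of_nonzero' z hz₀).1 hM z'
  constructor <;> apply smul_left_injective K hz₀'
  · change a • r • z = a' • r • z
    rw [← hz'.sG_smul, smul_comm, smul_comm (sG K), hz.sG_smul]
  · change l • r • z = l' • r • z
    rw [← hz'.sZ_smul, smul_comm, smul_comm (sZ K), hz.sZ_smul]

end IsWeightVector

variable (K M) in
theorem exists_isWeightVector_ne_zero [IsAlgClosed K] [CharZero K] [IsScalarTower K (Dgeq K) M]
    [FiniteDimensional K M] [Nontrivial M] :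
    ∃ (a l : K) (z : M), IsWeightVector a l z ∧ z ≠ 0 := by
  let act : Dgeq K →ₐ[K] Module.End K M := Algebra.lsmul K K M
  obtain ⟨μ, hμ⟩ := (act (sZ K)).exists_eigenvalue
  obtain ⟨l, hl, hl'⟩ := exists_hasEigenvalue_and_not_hasEigenvalue_sub hμ one_ne_zero
  have hcomm : Commute (act (sZ K)) (act (sG K)) := Commute.map (sZ_mul_sG K) act
  obtain ⟨a, z, hZ, hG⟩ := exists_common_hasEigenvector_of_commute hcomm hl
  have hkill (w : Dgeq K) (hw : w * sZ K = sZ K * w + w) : w • z = 0 := by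
    have hact : act w * act (sZ K) = act (sZ K) * act w + (1 : K) • act w := by
      rw [← map_mul, hw, map_add, map_mul, one_smul]
    by_contra hwz
    exact hl' (Module.End.hasEigenvalue_of_hasEigenvector
      ⟨apply_mem_eigenspace_sub_of_mul_eq hact hZ.1, hwz⟩)
  exact ⟨a, l, z, ⟨hG.apply_eq_smul, hZ.apply_eq_smul, hkill _ (sU_mul_sZ K),
    hkill _ (sV_mul_sZ K)⟩, hZ.2⟩

end WeightVectors

section VermaModule

/-- The operator on functions that translates the argument by `d` and then multiplies by `w`. -/
def weightedShift {R ι : Type*} [CommSemiring R] [Add ι] (d : ι) (w : ι → R) :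
    Module.End R (ι → R) :=
  LinearMap.mulLeft R w ∘ₗ LinearMap.funLeft R R (· + d)

@[simp]
theorem weightedShift_apply {R ι : Type*} [CommSemiring R] [Add ι] (d : ι) (w F : ι → R) (p : ι) :
    weightedShift d w F p = w p * F (p + d) :=
  rfl

variable {K : Type} [Field K]

/-- The operators by which the generators of `D` act on the Verma module of weight `(a, l)`, once
that module is enlarged to contain inverse powers of `x` and arbitrary coefficient functions.

Formally, `F` stands for `∑ₙ xⁿ F(n, s) z` with `s = x⁻¹ y`, where `g z = a z`, `ζ z = l z` and
`u z = v z = 0`. From `gx = xg` and `gy = (y + x)g` one gets `g s = (s + 1) g`, and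
`yx = xy - x²/2` gives `y xⁿ = xⁿ⁺¹ (s - n/2)`. The operators for `u` and `v` are found as
combinations of the translations of `s` by `0`, `1/2` and `1` from their commutation relations with
`x` and `y` and from `u z = v z = 0`. -/
def vermaOperator (a : Kˣ) (l : K) : JGen → Module.End K (K × K → K)
  | .x => weightedShift (-1, 0) fun _ => 1
  | .y => weightedShift (-1, 0) fun (n, s) => s - (n - 1) / 2
  | .g => weightedShift (0, 1) fun _ => a
  | .ginv => weightedShift (0, -1) fun _ => ↑a⁻¹
  | .zeta => weightedShift (0, 0) fun (n, _) => n + l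
  | .u => weightedShift (1, 0) (fun _ => -2) + weightedShift (1, 1 / 2) (fun _ => 2 + 2 * (a : K))
      + weightedShift (1, 1) (fun _ => -2 * (a : K))
  | .v => weightedShift (1, 0) (fun (n, s) => 2 * s + 1 - n)
      + weightedShift (1, 1 / 2) (fun (n, s) => 2 * (n - s) + 2 * a * (n - 1 - s + l))
      + weightedShift (1, 1) (fun (n, s) => a * (2 * s + 1 - 3 * n - 2 * l))

open Classical in
variable (K) in
/-- The generator `z` of the Verma module: in the notation of `vermaOperator`, the coefficient of
`xⁿ z` is `1` for `n = 0` and vanishes for all other `n`. -/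
noncomputable def vermaVector : K × K → K := fun (n, _) => if n = 0 then 1 else 0

variable (K) in
theorem vermaVector_ne_zero : vermaVector K ≠ 0 := fun h => by
  simpa [vermaVector] using congrFun h (0, 0)

variable (a : Kˣ) (l : K)

theorem vermaOperator_g_vermaVector :
    vermaOperator a l .g (vermaVector K) = (a : K) • vermaVector K := by
  ext ⟨n, s⟩
  by_cases hn : n = 0 <;> simp [vermaOperator, vermaVector, hn]

theorem vermaOperator_zeta_vermaVector :
    vermaOperator a l .zeta (vermaVector K) = l • vermaVector K := by
  ext ⟨n, s⟩
  by_cases hn : n = 0 <;> simp [vermaOperator, vermaVector, hn]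

theorem vermaOperator_u_vermaVector : vermaOperator a l .u (vermaVector K) = 0 := by
  ext ⟨n, s⟩
  by_cases hn : n + 1 = 0 <;> simp [vermaOperator, vermaVector, hn]

theorem vermaOperator_v_vermaVector : vermaOperator a l .v (vermaVector K) = 0 := by
  ext ⟨n, s⟩
  by_cases hn : n + 1 = 0
  · simp only [vermaOperator, vermaVector, LinearMap.add_apply, Pi.add_apply, Pi.zero_apply,
      weightedShift_apply, hn, if_true]
    linear_combination (1 - (a : K)) * hn
  · simp [vermaOperator, vermaVector, hn]

variable [CharZero K]

theorem lift_vermaOperator_eq_of_JRel ⦃p q : FreeAlgebra K JGen⦄ (h : JRel K p q) :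
    FreeAlgebra.lift K (vermaOperator a l) p = FreeAlgebra.lift K (vermaOperator a l) q := by
  cases h <;> ext F ⟨n, s⟩ <;>
    simp only [vermaOperator, map_mul, map_add, map_sub, map_smul, map_one, lift_ι_apply,
      Module.End.mul_apply, LinearMap.add_apply, LinearMap.sub_apply, LinearMap.smul_apply,
      Pi.add_apply, Pi.sub_apply, Pi.smul_apply, smul_eq_mul, Module.End.one_apply,
      weightedShift_apply, Prod.mk_add_mk]
  case gginv | ginvg => simp
  all_goals ring_nf

/-- The enlarged Verma module of weight `(a, l)` as a representation of `D`. -/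
noncomputable def vermaRep : D K →ₐ[K] Module.End K (K × K → K) :=
  RingQuot.liftAlgHom K ⟨FreeAlgebra.lift K (vermaOperator a l), lift_vermaOperator_eq_of_JRel a l⟩

theorem vermaRep_Dmk_ι (i : JGen) : vermaRep a l (Dmk K (ι K i)) = vermaOperator a l i :=
  (RingQuot.liftAlgHom_mkAlgHom_apply K _ (lift_vermaOperator_eq_of_JRel a l) _).trans
    (lift_ι_apply _ _)

/-- The carrier of `vermaRep a l`, made a `D^{≥0}`-module by restriction. The parameters occur in
the type so that the module structure is found by instance search. -/
def VermaSpace (_a : Kˣ) (_l : K) : Type := K × K → K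

noncomputable instance : AddCommGroup (VermaSpace a l) := inferInstanceAs (AddCommGroup (K × K → K))

noncomputable instance : Module K (VermaSpace a l) := inferInstanceAs (Module K (K × K → K))

noncomputable instance : Module (Dgeq K) (VermaSpace a l) :=
  Module.compHom (K × K → K) ((vermaRep a l).comp (Dgeq K).val).toRingHom

instance : IsScalarTower K (Dgeq K) (VermaSpace a l) :=
  .of_algebraMap_smul fun r F => LinearMap.congr_fun ((vermaRep a l).commutes r) F

theorem VermaSpace.isWeightVector_vermaVector :
    IsWeightVector (M := VermaSpace a l) (a : K) l (vermaVector K) where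
  sG_smul := (LinearMap.congr_fun (vermaRep_Dmk_ι a l .g) _).trans
    (vermaOperator_g_vermaVector a l)
  sZ_smul := (LinearMap.congr_fun (vermaRep_Dmk_ι a l .zeta) _).trans
    (vermaOperator_zeta_vermaVector a l)
  sU_smul := (LinearMap.congr_fun (vermaRep_Dmk_ι a l .u) _).trans
    (vermaOperator_u_vermaVector a l)
  sV_smul := (LinearMap.congr_fun (vermaRep_Dmk_ι a l .v) _).trans
    (vermaOperator_v_vermaVector a l)

end VermaModule

namespace Tmod

variable {K : Type} [Field K] {a c : K}

/-- The class of `1` in `T_{a,c}`, that is, the basis vector `z_{a,c}`. -/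
noncomputable def generator (a c : K) : Tmod K a c := Submodule.Quotient.mk 1

theorem span_generator (a c : K) : Submodule.span (Dgeq K) {generator a c} = ⊤ := by
  refine eq_top_iff.2 fun m _ => Submodule.mem_span_singleton.2 ?_
  obtain ⟨d, rfl⟩ := Submodule.Quotient.mk_surjective _ m
  exact ⟨d, by rw [generator, ← Submodule.Quotient.mk_smul, smul_eq_mul, mul_one]⟩

theorem smul_generator_eq_zero {d : Dgeq K}
    (hd : d ∈ ({sG K - algebraMap K (Dgeq K) a, sZ K + algebraMap K (Dgeq K) (c / 2), sU K, sV K} :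
      Set (Dgeq K))) : d • generator a c = 0 := by
  rw [generator, ← Submodule.Quotient.mk_smul, smul_eq_mul, mul_one, Submodule.Quotient.mk_eq_zero]
  exact Submodule.subset_span hd

theorem isWeightVector_generator (a c : K) : IsWeightVector a (-(c / 2)) (generator a c) where
  sG_smul := by
    rw [← sub_eq_zero, ← algebraMap_smul (Dgeq K) a, ← sub_smul]
    exact smul_generator_eq_zero (by simp)
  sZ_smul := by
    rw [neg_smul, ← add_eq_zero_iff_eq_neg, ← algebraMap_smul (Dgeq K) (c / 2), ← add_smul]
    exact smul_generator_eq_zero (by simp)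
  sU_smul := smul_generator_eq_zero (by simp)
  sV_smul := smul_generator_eq_zero (by simp)

section UniversalProperty

variable {M : Type*} [AddCommGroup M] [Module K M] [Module (Dgeq K) M] [IsScalarTower K (Dgeq K) M]

theorem exists_linearMap_generator_eq {z : M} (hz : IsWeightVector a (-(c / 2)) z) :
    ∃ φ : Tmod K a c →ₗ[Dgeq K] M, φ (generator a c) = z := by
  refine ⟨Submodule.liftQ _ (LinearMap.toSpanSingleton (Dgeq K) M z) (Submodule.span_le.2 ?_),
    one_smul _ z⟩
  rintro d (rfl | rfl | rfl | rfl)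
  · simp [sub_smul, hz.sG_smul]
  · simp [add_smul, hz.sZ_smul]
  · exact hz.sU_smul
  · exact hz.sV_smul

end UniversalProperty

variable [CharZero K]

theorem generator_ne_zero (ha : a ≠ 0) : generator a c ≠ 0 := by
  lift a to Kˣ using ha.isUnit
  obtain ⟨φ, hφ⟩ := exists_linearMap_generator_eq
    (VermaSpace.isWeightVector_vermaVector a (-(c / 2)))
  intro h
  rw [h, map_zero] at hφ
  exact vermaVector_ne_zero K hφ.symm

theorem finrank_eq_one (ha : a ≠ 0) : Module.finrank K (Tmod K a c) = 1 :=
  (isWeightVector_generator a c).finrank_eq_one (generator_ne_zero ha) (span_generator a c)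

theorem isSimpleModule (ha : a ≠ 0) : IsSimpleModule (Dgeq K) (Tmod K a c) :=
  (isSimpleModule_iff ..).2 (is_simple_module_of_finrank_eq_one (finrank_eq_one ha))

theorem nonempty_linearEquiv_iff {M : Type*} [AddCommGroup M] [Module K M] [Module (Dgeq K) M]
    [IsScalarTower K (Dgeq K) M] [IsSimpleModule (Dgeq K) M] (ha : a ≠ 0) :
    Nonempty (M ≃ₗ[Dgeq K] Tmod K a c) ↔ ∃ z : M, IsWeightVector a (-(c / 2)) z ∧ z ≠ 0 := by
  constructor
  · rintro ⟨e⟩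
    exact ⟨e.symm (generator a c), (isWeightVector_generator a c).map e.symm.toLinearMap,
      e.symm.map_ne_zero_iff.2 (generator_ne_zero ha)⟩
  · rintro ⟨z, hz, hz₀⟩
    obtain ⟨φ, hφ⟩ := exists_linearMap_generator_eq hz
    have hφ₀ : φ ≠ 0 := by
      rintro rfl
      exact hz₀ hφ.symm
    have := isSimpleModule (c := c) ha
    exact ⟨(LinearEquiv.ofBijective φ (LinearMap.bijective_of_ne_zero hφ₀)).symm⟩

end Tmod

/-- every finite-dimensional simple `D^{≥0}`-module is one-dimensional and
isomorphic to `T_{a,c}` for a unique pair `(a,c) ∈ k^× × k`; that is, `(a,c) ↦ T_{a,c}` induces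
a bijection from `k^× × k` onto the set of isomorphism classes of finite-dimensional simple
`D^{≥0}`-modules. -/
theorem irrep_Dgeq_classification :
    (∀ a c : k, a ≠ 0 →
      IsSimpleModule (Dgeq k) (Tmod k a c) ∧ Module.finrank k (Tmod k a c) = 1) ∧
    (∀ (M : Type) (_ : AddCommGroup M) (_ : Module k M) (_ : Module (Dgeq k) M)
        (_ : IsScalarTower k (Dgeq k) M) (_ : FiniteDimensional k M),
      IsSimpleModule (Dgeq k) M →
        (Module.finrank k M = 1 ∧
          ∃! p : k × k, p.1 ≠ 0 ∧ Nonempty (M ≃ₗ[Dgeq k] Tmod k p.1 p.2))) := by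
  refine ⟨fun a c ha => ⟨Tmod.isSimpleModule ha, Tmod.finrank_eq_one ha⟩, ?_⟩
  intro M _ _ _ _ _ _
  have := IsSimpleModule.nontrivial (Dgeq k) M
  obtain ⟨a, l, z, hz, hz₀⟩ := exists_isWeightVector_ne_zero k M
  have ha : a ≠ 0 := hz.left_ne_zero hz₀
  have hfin : Module.finrank k M = 1 :=
    hz.finrank_eq_one hz₀ (IsSimpleModule.span_singleton_eq_top (Dgeq k) hz₀)
  refine ⟨hfin, (a, -2 * l), ⟨ha, (Tmod.nonempty_linearEquiv_iff ha).2 ⟨z, ?_, hz₀⟩⟩, ?_⟩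
  · convert hz using 1
    ring
  · rintro ⟨a', c'⟩ ⟨ha', he⟩
    obtain ⟨z', hz', hz₀'⟩ := (Tmod.nonempty_linearEquiv_iff ha').1 he
    obtain ⟨rfl, rfl⟩ := hz.weight_unique hfin hz₀ hz' hz₀'
    exact Prod.ext rfl (by ring)
end
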